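/- There exist constants c > 0 and C > 0 such that for every U ∈ X, Re B(U,U) ≥ c ‖U‖²_X − C ‖U‖²_H; that is, the form B satisfies a Gårding-type coercivity inequality on X relative to the weaker norm of H. -/

import Mathlib

noncomputable section

open MeasureTheory Complex Filter Topology
open scoped Real NNReal ContDiff

/-- The plane `ℝ²`. -/
abbrev R2 : Type := EuclideanSpace ℝ (Fin 2)

/-- Euclidean dot product on `ℝ²`. -/
def rdot (x ξ : R2) : ℝ := x 0 * ξ 0 + x 1 * ξ 1

/-- `testFT φ ξ = ∫ e^{i x·ξ} φ(x) dx`, the (inverse-type) Fourier integral of a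
test function `φ`. -/
def testFT (φ : R2 → ℂ) (ξ : R2) : ℂ :=
  ∫ x : R2, Complex.exp (Complex.I * (rdot x ξ : ℂ)) * φ x

/-- The squared `H^s(ℝ²)` norm of the distribution whose Fourier transform is `F`:
`‖f‖² = (2π)⁻² ∫ (1+|ξ|²)^s |f̂(ξ)|² dξ`. -/
def wnormSq (s : ℝ) (F : R2 → ℂ) : ℝ :=
  ((2 * π) ^ 2)⁻¹ * ∫ ξ : R2, ((1 : ℝ) + ‖ξ‖ ^ 2) ^ s * ‖F ξ‖ ^ 2

/-- The `H^s(ℝ²)` norm (Fourier-side representation). -/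
def wnorm (s : ℝ) (F : R2 → ℂ) : ℝ := Real.sqrt (wnormSq s F)

/-- `F` is the Fourier transform of an element of `H^s(ℝ²)`. -/
def MemHs (s : ℝ) (F : R2 → ℂ) : Prop :=
  AEStronglyMeasurable F (volume : Measure R2) ∧
    Integrable (fun ξ : R2 => ((1 : ℝ) + ‖ξ‖ ^ 2) ^ s * ‖F ξ‖ ^ 2) volume

/-- An element `f` of `H̃^s(Γ)`: a distribution on `ℝ²` of Sobolev regularity `s`
supported in the closure of `Γ`, represented by its Fourier transform `ft`
(a continuous function, `f` being a compactly supported distribution).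
The support condition is expressed by testing against smooth compactly supported
functions `φ` whose support avoids `closure Γ`, via the Parseval pairing
`∫ f φ dx = (2π)⁻² ∫ f̂(ξ) φ̌(ξ) dξ` with `φ̌(ξ) = ∫ e^{ix·ξ} φ(x) dx`. -/
structure HTildeElt (s : ℝ) (Γ : Set R2) where
  ft : R2 → ℂ
  cont : Continuous ft
  mem : Integrable (fun ξ : R2 => ((1 : ℝ) + ‖ξ‖ ^ 2) ^ s * ‖ft ξ‖ ^ 2) volume
  supp : ∀ φ : R2 → ℂ, ContDiff ℝ ∞ φ → HasCompactSupport φ →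
    tsupport φ ∩ closure Γ = ∅ → (∫ ξ : R2, ft ξ * testFT φ ξ) = 0

/-- `Γ` is a bounded Lipschitz domain in `ℝ²`: a nonempty bounded open set whose
boundary is locally, after a rigid motion, the graph of a Lipschitz function with
the domain on one side. -/
def IsLipschitzDomain (Γ : Set R2) : Prop :=
  IsOpen Γ ∧ Bornology.IsBounded Γ ∧ Γ.Nonempty ∧
    ∀ x ∈ frontier Γ, ∃ (e : R2 ≃ₗᵢ[ℝ] R2) (L : ℝ≥0) (f : ℝ → ℝ) (U : Set R2),
      LipschitzWith L f ∧ IsOpen U ∧ x ∈ U ∧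
        ∀ y ∈ U, (y ∈ Γ ↔ f (e y 0) < e y 1)

/-- `ξ·V̂(ξ)`, i.e. `-i` times the Fourier transform of `div V`. -/
def dotFt (F1 F2 : R2 → ℂ) (ξ : R2) : ℂ := (ξ 0 : ℂ) * F1 ξ + (ξ 1 : ℂ) * F2 ξ

/-- `ξ⊥·V̂(ξ)`, i.e. `-i` times the Fourier transform of `curl V`. -/
def curlFt (F1 F2 : R2 → ℂ) (ξ : R2) : ℂ := (ξ 1 : ℂ) * F1 ξ - (ξ 0 : ℂ) * F2 ξ

/-- An element of `X = H̃^{-1/2}_div(Γ)`: a pair of elements of `H̃^{-1/2}(Γ)`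
whose distributional divergence also belongs to `H̃^{-1/2}(Γ)`. -/
structure Xelt (Γ : Set R2) where
  c1 : HTildeElt (-(1/2) : ℝ) Γ
  c2 : HTildeElt (-(1/2) : ℝ) Γ
  divMem : Integrable (fun ξ : R2 =>
    ((1 : ℝ) + ‖ξ‖ ^ 2) ^ (-(1/2) : ℝ) * ‖dotFt c1.ft c2.ft ξ‖ ^ 2) volume

/-- The Fourier transform of `div V`. -/
def divFt {Γ : Set R2} (V : Xelt Γ) (ξ : R2) : ℂ :=
  Complex.I * dotFt V.c1.ft V.c2.ft ξ

/-- The squared `H`-norm `‖V‖²_H` of a vector field. -/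
def HnormSq {Γ : Set R2} (V : Xelt Γ) : ℝ :=
  wnormSq (-(1/2)) V.c1.ft + wnormSq (-(1/2)) V.c2.ft

/-- The squared `X`-norm `‖V‖²_X = ‖V‖²_H + ‖div V‖²_{H̃^{-1/2}}`. -/
def XnormSq {Γ : Set R2} (V : Xelt Γ) : ℝ :=
  HnormSq V + wnormSq (-(1/2)) (divFt V)

/-- The `X`-norm. -/
def Xnorm {Γ : Set R2} (V : Xelt Γ) : ℝ := Real.sqrt (XnormSq V)

/-- `ĝ₀(ξ) = i/√(k²-|ξ|²)`, with the branch `√(k²-|ξ|²) = i√(|ξ|²-k²)` for `|ξ| > k`. -/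
def g0hat (k : ℝ) (ξ : R2) : ℂ :=
  if ‖ξ‖ < k then Complex.I / ((Real.sqrt (k ^ 2 - ‖ξ‖ ^ 2) : ℝ) : ℂ)
  else 1 / ((Real.sqrt (‖ξ‖ ^ 2 - k ^ 2) : ℝ) : ℂ)

/-- The integrand of the sesquilinear form `B`:
`ĝ₀(ξ) [ (|ξ|²-k²) a₁ b̄₁ - k² a₂ b̄₂ ]` with `a₁ = ξ·Ŵ/|ξ|`, `a₂ = ξ⊥·Ŵ/|ξ|`, etc. -/
def Bintegrand (k : ℝ) (F1 F2 G1 G2 : R2 → ℂ) (ξ : R2) : ℂ :=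
  g0hat k ξ *
    (((‖ξ‖ ^ 2 - k ^ 2 : ℝ) : ℂ) * (dotFt F1 F2 ξ * starRingEnd ℂ (dotFt G1 G2 ξ)) -
      ((k ^ 2 : ℝ) : ℂ) * (curlFt F1 F2 ξ * starRingEnd ℂ (curlFt G1 G2 ξ))) /
    ((‖ξ‖ ^ 2 : ℝ) : ℂ)

/-- The sesquilinear form `B(W,V)`. -/
def Bform (k : ℝ) {Γ : Set R2} (W V : Xelt Γ) : ℂ :=
  ∫ ξ : R2, Bintegrand k W.c1.ft W.c2.ft V.c1.ft V.c2.ft ξ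

/-- The sesquilinear form `E(q,V) = B(curl⃗ q, V)`, where
`curl⃗ q = (∂q/∂x₂, -∂q/∂x₁)` has Fourier transform `(iξ₂ q̂, -iξ₁ q̂)`. -/
def Eform (k : ℝ) {Γ : Set R2} (q : HTildeElt (1/2 : ℝ) Γ) (V : Xelt Γ) : ℂ :=
  ∫ ξ : R2, Bintegrand k (fun η => Complex.I * (η 1 : ℂ) * q.ft η)
      (fun η => -(Complex.I * (η 0 : ℂ) * q.ft η)) V.c1.ft V.c2.ft ξ

/-- The inner product of the Hilbert space `X`; by the Riesz representation
theorem, every bounded conjugate-linear functional on `X` is `V ↦ Xinner Y V`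
for a unique `Y ∈ X`, with functional norm `Xnorm Y`. -/
def Xinner {Γ : Set R2} (Y V : Xelt Γ) : ℂ :=
  ((((2 * π) ^ 2)⁻¹ : ℝ) : ℂ) * ∫ ξ : R2, ((((1 : ℝ) + ‖ξ‖ ^ 2) ^ (-(1/2) : ℝ) : ℝ) : ℂ) *
    (Y.c1.ft ξ * starRingEnd ℂ (V.c1.ft ξ) + Y.c2.ft ξ * starRingEnd ℂ (V.c2.ft ξ) +
      divFt Y ξ * starRingEnd ℂ (divFt V ξ))

/-- `√(k²-|ξ|²)`, with the branch `i√(|ξ|²-k²)` for `|ξ| > k`. -/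
def rootk (k : ℝ) (ξ : R2) : ℂ :=
  if ‖ξ‖ < k then ((Real.sqrt (k ^ 2 - ‖ξ‖ ^ 2) : ℝ) : ℂ)
  else Complex.I * ((Real.sqrt (‖ξ‖ ^ 2 - k ^ 2) : ℝ) : ℂ)

/-- The Fourier multiplier `i/(2√(k²-|ξ|²))` of the Helmholtz single-layer
operator `T` with kernel `e^{ik|x-y|}/(4π|x-y|)`. -/
def mT (k : ℝ) (ξ : R2) : ℂ := Complex.I / (2 * rootk k ξ)

/-- The Fourier multiplier `1/(2|ξ|)` of the Laplace single-layer operator `T₀`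
with kernel `1/(4π|x-y|)`. -/
def mT0 (ξ : R2) : ℂ := 1 / (2 * ((‖ξ‖ : ℝ) : ℂ))

/-- The Fourier multiplier of `R = T - T₀`. -/
def mR (k : ℝ) (ξ : R2) : ℂ := mT k ξ - mT0 ξ

/-- The distributions with Fourier data `G` and `E` have the same restriction to
the open set `Γ`: `⟨G - E, φ⟩ = 0` for all smooth `φ` compactly supported in `Γ`
(pairing written on the Fourier side). -/
def AgreeOn (Γ : Set R2) (G E : R2 → ℂ) : Prop :=
  ∀ φ : R2 → ℂ, ContDiff ℝ ∞ φ → HasCompactSupport φ → tsupport φ ⊆ Γ →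
    (∫ ξ : R2, (G ξ - E ξ) * testFT φ ξ) = 0

/-- The duality pairing `⟨f, ψ⟩` between `H^{1/2}(Γ)` and `H̃^{-1/2}(Γ)`, written
on the Fourier side (Plancherel): `(2π)⁻² ∫ f̂(ξ) conj(ψ̂(ξ)) dξ`, where `G = f̂`
is the Fourier data of (an extension of) `f`. -/
def dualPair (G ψ : R2 → ℂ) : ℂ :=
  ((((2 * π) ^ 2)⁻¹ : ℝ) : ℂ) * ∫ ξ : R2, G ξ * starRingEnd ℂ (ψ ξ)

open scoped FourierTransform SchwartzMap in
/-- Cutoff function and its Fourier transform. -/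
lemma exists_cutoff (R : ℝ) (hR : 0 < R) : ∃ χ : R2 → ℂ, ContDiff ℝ ∞ χ ∧ HasCompactSupport χ ∧
    (∀ x, ‖x‖ ≤ R → χ x = 1) ∧ Continuous (testFT χ) ∧
    (∃ D : ℝ, 0 < D ∧ ∀ ξ, ‖testFT χ ξ‖ ≤ D * ((1 + ‖ξ‖ ^ 2) ^ 2)⁻¹) ∧
    (∫ ξ : R2, testFT χ ξ) = (((2 * π) ^ 2 : ℝ) : ℂ) := by
  let b : ContDiffBump (0 : R2) := ⟨R, R + 1, hR, by linarith⟩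
  let χ : R2 → ℂ := fun x => ((b x : ℝ) : ℂ)
  have h1 : ContDiff ℝ ∞ χ := Complex.ofRealCLM.contDiff.comp b.contDiff
  have h2 : HasCompactSupport χ := b.hasCompactSupport.comp_left (g := fun r : ℝ => (r : ℂ)) (by simp)
  let S : 𝓢(R2, ℂ) := h2.toSchwartzMap h1
  let F : 𝓢(R2, ℂ) := 𝓕⁻ S
  have hF : ∀ ξ, testFT χ ξ = F ((2 * π)⁻¹ • ξ) := by
    intro ξ
    have : F ((2 * π)⁻¹ • ξ) = 𝓕⁻ (S : R2 → ℂ) ((2 * π)⁻¹ • ξ) := by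
      rw [← SchwartzMap.fourierInv_coe]
    rw [this, Real.fourierInv_eq']
    unfold testFT
    congr 1
    ext x
    have hS : S x = χ x := rfl
    rw [hS, smul_eq_mul]
    congr 2
    have : (2 * π * inner ℝ x ((2 * π)⁻¹ • ξ)) = rdot x ξ := by
      rw [inner_smul_right, ← mul_assoc, mul_inv_cancel₀ (by positivity), one_mul]
      simp [rdot, PiLp.inner_apply, mul_comm]
    rw [this]; ring
  have h1' : ∀ x, ‖x‖ ≤ R → χ x = 1 := by
    intro x hx
    have : b x = 1 := b.one_of_mem_closedBall (by simpa using hx)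
    simp [χ, this]
  refine ⟨χ, h1, h2, h1', ?_, ?_, ?_⟩
  · have : testFT χ = fun ξ => F ((2 * π)⁻¹ • ξ) := funext hF
    rw [this]
    exact F.continuous.comp (by fun_prop)
  · obtain ⟨D0, hD0p, hD0⟩ := F.decay 0 0
    obtain ⟨D4, hD4p, hD4⟩ := F.decay 4 0
    refine ⟨2 * D0 + 2 * (2 * π) ^ 4 * D4, by positivity, fun ξ => ?_⟩
    rw [hF ξ, ← div_eq_mul_inv, le_div_iff₀ (by positivity)]
    have e0 := hD0 ((2 * π)⁻¹ • ξ)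
    have e4 := hD4 ((2 * π)⁻¹ • ξ)
    simp only [pow_zero, one_mul, norm_iteratedFDeriv_zero] at e0 e4
    rw [norm_smul, norm_inv, Real.norm_of_nonneg (by positivity : 0 ≤ 2 * π), mul_pow] at e4
    set A := ‖F ((2 * π)⁻¹ • ξ)‖
    have hA : 0 ≤ A := norm_nonneg _
    have e5 : ‖ξ‖ ^ 4 * A ≤ (2 * π) ^ 4 * D4 := by
      have := mul_le_mul_of_nonneg_left e4 (by positivity : 0 ≤ (2 * π) ^ 4)
      calc _ = (2 * π) ^ 4 * ((2 * π)⁻¹ ^ 4 * ‖ξ‖ ^ 4 * A) := by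
            rw [← mul_assoc, ← mul_assoc, ← mul_pow, mul_inv_cancel₀ (by positivity)]; ring
        _ ≤ _ := this
    nlinarith [mul_nonneg hA (sq_nonneg (1 - ‖ξ‖ ^ 2))]
  · have : (fun ξ => testFT χ ξ) = fun ξ => F ((2 * π)⁻¹ • ξ) := funext hF
    rw [this, Measure.integral_comp_smul]
    have hi : (∫ x, F x) = 1 := by
      have e : 𝓕 F = S := FourierTransform.fourier_fourierInv_eq S
      have e2 : (𝓕 F) 0 = S 0 := by rw [e]
      rw [SchwartzMap.fourier_coe, Real.fourier_eq'] at e2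
      have e3 : S 0 = χ 0 := rfl
      rw [e3, h1' 0 (by simpa using hR.le)] at e2
      simpa using e2
    rw [hi]
    simp only [finrank_euclideanSpace, Fintype.card_fin, inv_pow, inv_inv]
    rw [abs_of_nonneg (by positivity)]
    simp

lemma peetre (ξ η : R2) : ((1 + ‖ξ - η‖ ^ 2) ^ 2)⁻¹ ≤
    4 * (1 + ‖η‖ ^ 2) ^ 2 * ((1 + ‖ξ‖ ^ 2) ^ 2)⁻¹ := by
  have h : 1 + ‖ξ‖ ^ 2 ≤ 2 * (1 + ‖η‖ ^ 2) * (1 + ‖ξ - η‖ ^ 2) := by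
    have : ‖ξ‖ ≤ ‖ξ - η‖ + ‖η‖ := by simpa using norm_add_le (ξ - η) η
    nlinarith [norm_nonneg ξ, norm_nonneg η, norm_nonneg (ξ - η), sq_nonneg (‖ξ - η‖ - ‖η‖),
      mul_nonneg (sq_nonneg ‖η‖) (sq_nonneg ‖ξ - η‖)]
  rw [← div_eq_mul_inv, le_div_iff₀ (by positivity), inv_mul_le_iff₀ (by positivity)]
  calc (1 + ‖ξ‖ ^ 2) ^ 2 ≤ (2 * (1 + ‖η‖ ^ 2) * (1 + ‖ξ - η‖ ^ 2)) ^ 2 := by gcongr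
    _ = _ := by ring

lemma integrable_w : Integrable (fun ξ : R2 => ((1 : ℝ) + ‖ξ‖ ^ 2) ^ (-(7/2) : ℝ)) volume := by
  have := integrable_rpow_neg_one_add_norm_sq (E := R2) (μ := volume) (r := 7)
    (by simp; norm_num)
  simpa [neg_div] using this

lemma w_mul (ξ : R2) : ((1 : ℝ) + ‖ξ‖ ^ 2) ^ (-(1/2) : ℝ) * ((1 : ℝ) + ‖ξ‖ ^ 2) ^ (-(7/2) : ℝ)
    = (((1 + ‖ξ‖ ^ 2) ^ 2)⁻¹) ^ 2 := by
  have h : (0:ℝ) < 1 + ‖ξ‖ ^ 2 := by positivity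
  rw [← Real.rpow_add h, ← inv_pow, ← pow_mul]
  have e : (-(1/2) + -(7/2) : ℝ) = -((4 : ℕ) : ℝ) := by norm_num
  rw [e, Real.rpow_neg h.le, Real.rpow_natCast, inv_pow]

/-- Cauchy-Schwarz, quantitative AM-GM version. -/
lemma amgm (ξ : R2) (z t : ℝ) (hz : 0 ≤ z) (ht : 0 < t) : z * ((1 + ‖ξ‖ ^ 2) ^ 2)⁻¹ ≤
    t * (((1 : ℝ) + ‖ξ‖ ^ 2) ^ (-(1/2) : ℝ) * z ^ 2) + t⁻¹ * ((1 : ℝ) + ‖ξ‖ ^ 2) ^ (-(7/2) : ℝ) := by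
  have h := w_mul ξ
  set a := ((1 : ℝ) + ‖ξ‖ ^ 2) ^ (-(1/2) : ℝ)
  set b := ((1 : ℝ) + ‖ξ‖ ^ 2) ^ (-(7/2) : ℝ)
  set q := ((1 + ‖ξ‖ ^ 2) ^ 2)⁻¹
  have ha : 0 ≤ a := by positivity
  have hb : 0 ≤ b := by positivity
  have hq : 0 ≤ q := by positivity
  have hP : 0 ≤ t * (a * z ^ 2) := by positivity
  have hQ : 0 ≤ t⁻¹ * b := by positivity
  have hx : (z * q) ^ 2 = (t * (a * z ^ 2)) * (t⁻¹ * b) := by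
    rw [mul_pow, ← h]
    field_simp
  refine abs_le_of_sq_le_sq' ?_ (by positivity) |>.2
  rw [hx]
  nlinarith

lemma integrable_ft {f : R2 → ℂ} (hf : Continuous f)
    (hm : Integrable (fun ξ : R2 => ((1 : ℝ) + ‖ξ‖ ^ 2) ^ (-(1/2) : ℝ) * ‖f ξ‖ ^ 2) volume) :
    Integrable (fun ξ : R2 => ‖f ξ‖ * ((1 + ‖ξ‖ ^ 2) ^ 2)⁻¹) volume := by
  refine ((hm.const_mul 1).add (integrable_w.const_mul 1⁻¹)).mono' ?_ (.of_forall fun ξ => ?_)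
  · refine Continuous.aestronglyMeasurable ?_
    exact hf.norm.mul (Continuous.inv₀ (by fun_prop) (fun ξ => by positivity))
  · rw [Real.norm_of_nonneg (by positivity)]
    exact amgm ξ ‖f ξ‖ 1 (norm_nonneg _) one_pos

lemma cs_ft {f : R2 → ℂ} (hf : Continuous f)
    (hm : Integrable (fun ξ : R2 => ((1 : ℝ) + ‖ξ‖ ^ 2) ^ (-(1/2) : ℝ) * ‖f ξ‖ ^ 2) volume) :
    (∫ ξ : R2, ‖f ξ‖ * ((1 + ‖ξ‖ ^ 2) ^ 2)⁻¹) ^ 2 ≤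
      4 * (∫ ξ : R2, ((1 : ℝ) + ‖ξ‖ ^ 2) ^ (-(7/2) : ℝ)) *
        ∫ ξ : R2, ((1 : ℝ) + ‖ξ‖ ^ 2) ^ (-(1/2) : ℝ) * ‖f ξ‖ ^ 2 := by
  set I := ∫ ξ : R2, ‖f ξ‖ * ((1 + ‖ξ‖ ^ 2) ^ 2)⁻¹
  set K := ∫ ξ : R2, ((1 : ℝ) + ‖ξ‖ ^ 2) ^ (-(7/2) : ℝ)
  set N := ∫ ξ : R2, ((1 : ℝ) + ‖ξ‖ ^ 2) ^ (-(1/2) : ℝ) * ‖f ξ‖ ^ 2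
  have hI : 0 ≤ I := integral_nonneg fun ξ => by positivity
  have hK : 0 ≤ K := integral_nonneg fun ξ => by positivity
  have hN : 0 ≤ N := integral_nonneg fun ξ => by positivity
  have key : ∀ t : ℝ, 0 < t → I ≤ t * N + t⁻¹ * K := by
    intro t ht
    rw [← integral_const_mul, ← integral_const_mul,
      ← integral_add (hm.const_mul t) (integrable_w.const_mul t⁻¹)]
    exact integral_mono (integrable_ft hf hm)
      ((hm.const_mul t).add (integrable_w.const_mul t⁻¹))
      (fun ξ => amgm ξ ‖f ξ‖ t (norm_nonneg _) ht)
  have key2 : ∀ t : ℝ, 0 ≤ N * (t * t) + (-I) * t + K := by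
    intro t
    rcases lt_or_ge 0 t with ht | ht
    · have h := mul_le_mul_of_nonneg_left (key t ht) ht.le
      have : t * (t * N + t⁻¹ * K) = N * (t * t) + K := by field_simp
      linarith
    · nlinarith [mul_nonneg hN (mul_self_nonneg t), mul_nonneg hI (neg_nonneg.2 ht)]
  have := discrim_le_zero key2
  unfold discrim at this
  nlinarith

/-- Approximate identity. -/
lemma peak {f X : R2 → ℂ} (hf : Continuous f)
    (hfi : Integrable (fun ξ : R2 => ‖f ξ‖ * ((1 + ‖ξ‖ ^ 2) ^ 2)⁻¹) volume)
    (hX : Continuous X) (D : ℝ) (hD : 0 < D) (hXb : ∀ ξ, ‖X ξ‖ ≤ D * ((1 + ‖ξ‖ ^ 2) ^ 2)⁻¹) (ξ₀ : R2) :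
    Tendsto (fun n : ℕ => ∫ ξ : R2, f ξ * ((n : ℂ) ^ 2 * X ((n : ℝ) • (ξ - ξ₀)))) atTop
      (𝓝 (f ξ₀ * ∫ ξ : R2, X ξ)) := by
  have hQi : Integrable (fun ξ : R2 => ((1 + ‖ξ‖ ^ 2) ^ 2)⁻¹) volume := by
    have := integrable_rpow_neg_one_add_norm_sq (E := R2) (μ := volume) (r := 4)
      (by simp; norm_num)
    refine this.congr (.of_forall fun ξ => ?_)
    have h : (0:ℝ) < 1 + ‖ξ‖ ^ 2 := by positivity
    have e : (-4 / 2 : ℝ) = - (2 : ℕ) := by norm_num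
    simp only [e, Real.rpow_neg h.le, Real.rpow_natCast]
  have hXi : Integrable X volume :=
    (hQi.const_mul D).mono' hX.aestronglyMeasurable (.of_forall hXb)
  let g : R2 → ℂ := fun ζ => f (ζ + ξ₀)
  have hg : Continuous g := hf.comp (by fun_prop)
  have hgi : Integrable (fun ξ : R2 => ‖g ξ‖ * ((1 + ‖ξ‖ ^ 2) ^ 2)⁻¹) volume := by
    have h1 : Integrable (fun ξ : R2 => ‖f ξ‖ * ((1 + ‖ξ - ξ₀‖ ^ 2) ^ 2)⁻¹) volume := by
      refine (hfi.const_mul (4 * (1 + ‖ξ₀‖ ^ 2) ^ 2)).mono' ?_ (.of_forall fun ξ => ?_)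
      · refine Continuous.aestronglyMeasurable ?_
        exact hf.norm.mul (Continuous.inv₀ (by fun_prop) (fun ξ => by positivity))
      · rw [Real.norm_of_nonneg (by positivity)]
        have := mul_le_mul_of_nonneg_left (peetre ξ ξ₀) (norm_nonneg (f ξ))
        linarith
    have h2 := h1.comp_add_right ξ₀
    simpa [g] using h2
  let s : Set R2 := Metric.closedBall 0 1
  have hs : MeasurableSet s := Metric.isClosed_closedBall.measurableSet
  obtain ⟨M, hM⟩ := (isCompact_closedBall (0 : R2) 1).exists_bound_of_continuousOn hg.continuousOn
  have hM0 : 0 ≤ M := (norm_nonneg _).trans (hM 0 (by simp))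
  have hA : Tendsto (fun n : ℕ => ∫ ζ : R2, s.indicator g ((n : ℝ)⁻¹ • ζ) * X ζ) atTop
      (𝓝 (∫ ζ : R2, g 0 * X ζ)) := by
    refine tendsto_integral_of_dominated_convergence (fun ζ => M * ‖X ζ‖) ?_
      (hXi.norm.const_mul M) ?_ ?_
    · intro n
      refine AEStronglyMeasurable.mul ?_ hX.aestronglyMeasurable
      have : Measurable (s.indicator g) := hg.measurable.indicator hs
      exact (this.comp (by fun_prop : Measurable fun ζ : R2 => (n : ℝ)⁻¹ • ζ)).aestronglyMeasurable
    · intro n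
      refine .of_forall fun ζ => ?_
      rw [norm_mul]
      gcongr
      by_cases h : (n : ℝ)⁻¹ • ζ ∈ s
      · rw [Set.indicator_of_mem h]; exact hM _ h
      · rw [Set.indicator_of_notMem h]; simpa using hM0
    · refine .of_forall fun ζ => ?_
      refine Tendsto.mul_const _ ?_
      have h0 : Tendsto (fun n : ℕ => (n : ℝ)⁻¹ • ζ) atTop (𝓝 (0 : R2)) := by
        simpa using (tendsto_inv_atTop_nhds_zero_nat (𝕜 := ℝ)).smul_const ζ
      have h1 : ∀ᶠ n : ℕ in atTop, (n : ℝ)⁻¹ • ζ ∈ s :=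
        h0.eventually (Metric.closedBall_mem_nhds 0 one_pos)
      have h2 : Tendsto (fun n : ℕ => g ((n : ℝ)⁻¹ • ζ)) atTop (𝓝 (g 0)) :=
        (hg.tendsto 0).comp h0
      refine h2.congr' (h1.mono fun n hn => ?_)
      exact (Set.indicator_of_mem hn g).symm
  have hout : ∀ n : ℕ, 1 ≤ n → ∀ ζ : R2,
      ‖sᶜ.indicator g ζ * ((n : ℂ) ^ 2 * X ((n : ℝ) • ζ))‖ ≤
        (4 * D * ((n : ℝ) ^ 2)⁻¹) * (‖g ζ‖ * ((1 + ‖ζ‖ ^ 2) ^ 2)⁻¹) := by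
    intro n hn ζ
    have hn' : (1 : ℝ) ≤ n := by exact_mod_cast hn
    by_cases h : ζ ∈ s
    · rw [Set.indicator_of_notMem (by simpa using h)]
      simp only [zero_mul, norm_zero]
      positivity
    · rw [Set.indicator_of_mem (by simpa using h), norm_mul, norm_mul, norm_pow, Complex.norm_natCast]
      have hz : 1 ≤ ‖ζ‖ := by
        simp only [s, Metric.mem_closedBall, dist_zero_right, not_le] at h
        exact h.le
      have h3 := hXb ((n : ℝ) • ζ)
      rw [norm_smul, Real.norm_of_nonneg (by positivity : (0:ℝ) ≤ n)] at h3
      have h4 : ((1 + ((n : ℝ) * ‖ζ‖) ^ 2) ^ 2)⁻¹ ≤ 4 * ((n : ℝ) ^ 4)⁻¹ * ((1 + ‖ζ‖ ^ 2) ^ 2)⁻¹ := by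
        have : (n : ℝ) ^ 2 * (1 + ‖ζ‖ ^ 2) ≤ 2 * (1 + (n * ‖ζ‖) ^ 2) := by
          nlinarith [mul_nonneg (sq_nonneg (n:ℝ)) (by nlinarith : 0 ≤ ‖ζ‖ ^ 2 - 1)]
        have h5 : ((n : ℝ) ^ 2 * (1 + ‖ζ‖ ^ 2)) ^ 2 ≤ (2 * (1 + (n * ‖ζ‖) ^ 2)) ^ 2 := by gcongr
        rw [mul_assoc, ← mul_inv, ← div_eq_mul_inv, le_div_iff₀ (by positivity),
          inv_mul_le_iff₀ (by positivity)]
        nlinarith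
      calc ‖g ζ‖ * ((n : ℝ) ^ 2 * ‖X ((n : ℝ) • ζ)‖)
          ≤ ‖g ζ‖ * ((n : ℝ) ^ 2 * (D * (4 * ((n : ℝ) ^ 4)⁻¹ * ((1 + ‖ζ‖ ^ 2) ^ 2)⁻¹))) := by
            gcongr
            exact h3.trans (by gcongr)
        _ = _ := by field_simp
  have hmeas : ∀ n : ℕ, Continuous fun ζ : R2 => (n : ℂ) ^ 2 * X ((n : ℝ) • ζ) := fun n =>
    continuous_const.mul (hX.comp (by fun_prop))
  have houti : ∀ n : ℕ, 1 ≤ n →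
      Integrable (fun ζ => sᶜ.indicator g ζ * ((n : ℂ) ^ 2 * X ((n : ℝ) • ζ))) volume := by
    intro n hn
    refine (hgi.const_mul _).mono' ?_ (.of_forall (hout n hn))
    exact (hg.measurable.indicator hs.compl).aestronglyMeasurable.mul
      (hmeas n).aestronglyMeasurable
  have hB : Tendsto (fun n : ℕ => ∫ ζ : R2, sᶜ.indicator g ζ * ((n : ℂ) ^ 2 * X ((n : ℝ) • ζ))) atTop
      (𝓝 0) := by
    refine squeeze_zero_norm' (a := fun n : ℕ => 4 * D * ((n : ℝ) ^ 2)⁻¹ *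
      ∫ ζ : R2, ‖g ζ‖ * ((1 + ‖ζ‖ ^ 2) ^ 2)⁻¹) ?_ ?_
    · filter_upwards [eventually_ge_atTop 1] with n hn
      rw [← integral_const_mul]
      exact norm_integral_le_of_norm_le (hgi.const_mul _) (.of_forall (hout n hn))
    · have : Tendsto (fun n : ℕ => ((n : ℝ) ^ 2)⁻¹) atTop (𝓝 0) := by
        have := (tendsto_inv_atTop_nhds_zero_nat (𝕜 := ℝ)).pow 2
        simpa using this
      simpa using (this.const_mul (4 * D)).mul_const (∫ ζ : R2, ‖g ζ‖ * ((1 + ‖ζ‖ ^ 2) ^ 2)⁻¹)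
  have hAB := hA.add hB
  rw [add_zero, integral_const_mul] at hAB
  have hg0 : g 0 = f ξ₀ := by simp [g]
  rw [hg0] at hAB
  refine hAB.congr' ?_
  filter_upwards [eventually_ge_atTop 1] with n hn
  have hn0 : (n : ℝ) ≠ 0 := by
    have : (1 : ℝ) ≤ n := by exact_mod_cast hn
    positivity
  have hin : Integrable (fun ζ => s.indicator g ζ * ((n : ℂ) ^ 2 * X ((n : ℝ) • ζ))) volume := by
    have : Integrable (fun ζ => M * ‖(n : ℂ) ^ 2 * X ((n : ℝ) • ζ)‖) volume :=
      (((hXi.comp_smul hn0).const_mul _).norm).const_mul M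
    refine this.mono' ((hg.measurable.indicator hs).aestronglyMeasurable.mul
      (hmeas n).aestronglyMeasurable) (.of_forall fun ζ => ?_)
    rw [norm_mul]
    gcongr
    by_cases h : ζ ∈ s
    · rw [Set.indicator_of_mem h]; exact hM _ h
    · rw [Set.indicator_of_notMem h]; simpa using hM0
  have e1 : (∫ ζ : R2, s.indicator g ((n : ℝ)⁻¹ • ζ) * X ζ) =
      ∫ ζ : R2, s.indicator g ζ * ((n : ℂ) ^ 2 * X ((n : ℝ) • ζ)) := by
    have := Measure.integral_comp_smul (volume : Measure R2)
      (fun ζ => s.indicator g ((n : ℝ)⁻¹ • ζ) * X ζ) (n : ℝ)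
    simp only [smul_smul, inv_mul_cancel₀ hn0, one_smul, finrank_euclideanSpace,
      Fintype.card_fin] at this
    have h6 : (fun ζ : R2 => s.indicator g ζ * ((n : ℂ) ^ 2 * X ((n : ℝ) • ζ))) =
        fun ζ => (n : ℂ) ^ 2 * (s.indicator g ζ * X ((n : ℝ) • ζ)) := by
      ext ζ; ring
    rw [h6, integral_const_mul, this, abs_of_nonneg (by positivity), Complex.real_smul]
    push_cast
    rw [← mul_assoc, mul_inv_cancel₀ (by exact_mod_cast pow_ne_zero 2 hn0), one_mul]
  rw [e1, ← integral_add hin (houti n hn)]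
  have := integral_add_right_eq_self (μ := (volume : Measure R2))
    (fun ξ : R2 => f ξ * ((n : ℂ) ^ 2 * X ((n : ℝ) • (ξ - ξ₀)))) ξ₀
  rw [← this]
  congr 1
  ext ζ
  rw [← add_mul, add_sub_cancel_right]
  congr 1
  exact congrFun (Set.indicator_self_add_compl s g) ζ

lemma testFT_phi {χ : R2 → ℂ} (h1 : ContDiff ℝ ∞ χ) (h2 : HasCompactSupport χ) (ξ₀ : R2)
    (n : ℕ) (hn : 1 ≤ n) (ξ : R2) :
    testFT (fun x => (χ ((n : ℝ)⁻¹ • x) - χ x) * Complex.exp (-(Complex.I * (rdot x ξ₀ : ℂ)))) ξ =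
      (n : ℂ) ^ 2 * testFT χ ((n : ℝ) • (ξ - ξ₀)) - testFT χ (ξ - ξ₀) := by
  have hn0 : (n : ℝ) ≠ 0 := by
    have : (1 : ℝ) ≤ n := by exact_mod_cast hn
    positivity
  have hint : ∀ η : R2, Integrable (fun x : R2 => Complex.exp (Complex.I * (rdot x η : ℂ)) * χ x)
      volume := by
    intro η
    refine Continuous.integrable_of_hasCompactSupport ?_ h2.mul_left
    refine Continuous.mul ?_ h1.continuous
    unfold rdot
    fun_prop
  have e1 : (n : ℂ) ^ 2 * testFT χ ((n : ℝ) • (ξ - ξ₀)) = ∫ x : R2,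
      Complex.exp (Complex.I * (rdot ((n : ℝ)⁻¹ • x) ((n : ℝ) • (ξ - ξ₀)) : ℂ)) * χ ((n : ℝ)⁻¹ • x) := by
    have := Measure.integral_comp_smul (volume : Measure R2)
      (fun x => Complex.exp (Complex.I * (rdot x ((n : ℝ) • (ξ - ξ₀)) : ℂ)) * χ x) (n : ℝ)⁻¹
    rw [this]
    simp only [finrank_euclideanSpace, Fintype.card_fin, inv_pow, inv_inv]
    rw [abs_of_nonneg (by positivity), Complex.real_smul]
    push_cast
    rfl
  have hi := (hint ((n : ℝ) • (ξ - ξ₀))).comp_smul (inv_ne_zero hn0)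
  rw [e1]
  unfold testFT
  rw [← integral_sub hi (hint _)]
  congr 1
  ext x
  have r1 : rdot ((n : ℝ)⁻¹ • x) ((n : ℝ) • (ξ - ξ₀)) = rdot x ξ - rdot x ξ₀ := by
    simp only [rdot, PiLp.smul_apply, PiLp.sub_apply, smul_eq_mul]
    field_simp
    ring
  have r2 : rdot x (ξ - ξ₀) = rdot x ξ - rdot x ξ₀ := by
    simp only [rdot, PiLp.sub_apply]
    ring
  rw [r1, r2]
  push_cast
  rw [mul_sub, sub_eq_add_neg (Complex.I * _), Complex.exp_add]
  ring

lemma ptwise (Γ : Set R2) (hΓ : Bornology.IsBounded Γ) (R : ℝ) : ∃ C : ℝ, 0 ≤ C ∧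
    ∀ u : HTildeElt (-(1/2) : ℝ) Γ, ∀ ξ₀ : R2, ‖ξ₀‖ ≤ R →
      ‖u.ft ξ₀‖ ^ 2 ≤ C * ∫ ξ : R2, ((1 : ℝ) + ‖ξ‖ ^ 2) ^ (-(1/2) : ℝ) * ‖u.ft ξ‖ ^ 2 := by
  obtain ⟨R₀, hR₀, hsub⟩ := hΓ.subset_closedBall_lt 0 (0 : R2)
  obtain ⟨χ, h1, h2, h3, hX, ⟨D, hD, hXb⟩, hXint⟩ := exists_cutoff (R₀ + 1) (by linarith)
  set K := ∫ ξ : R2, ((1 : ℝ) + ‖ξ‖ ^ 2) ^ (-(7/2) : ℝ)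
  have hK : 0 ≤ K := integral_nonneg fun ξ => by positivity
  refine ⟨(D * (4 * (1 + R ^ 2) ^ 2)) ^ 2 * (4 * K), by positivity, fun u ξ₀ hξ₀ => ?_⟩
  have hfi := integrable_ft u.cont u.mem
  have hcs := cs_ft u.cont u.mem
  set N := ∫ ξ : R2, ((1 : ℝ) + ‖ξ‖ ^ 2) ^ (-(1/2) : ℝ) * ‖u.ft ξ‖ ^ 2
  have hlim := peak u.cont hfi hX D hD hXb ξ₀
  have hbnd : ∀ ξ : R2, ‖u.ft ξ * testFT χ (ξ - ξ₀)‖ ≤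
      (D * (4 * (1 + R ^ 2) ^ 2)) * (‖u.ft ξ‖ * ((1 + ‖ξ‖ ^ 2) ^ 2)⁻¹) := by
    intro ξ
    rw [norm_mul]
    calc ‖u.ft ξ‖ * ‖testFT χ (ξ - ξ₀)‖
        ≤ ‖u.ft ξ‖ * (D * (4 * (1 + ‖ξ₀‖ ^ 2) ^ 2 * ((1 + ‖ξ‖ ^ 2) ^ 2)⁻¹)) := by
          gcongr
          exact (hXb _).trans (by gcongr; exact peetre ξ ξ₀)
      _ ≤ ‖u.ft ξ‖ * (D * (4 * (1 + R ^ 2) ^ 2 * ((1 + ‖ξ‖ ^ 2) ^ 2)⁻¹)) := by gcongr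
      _ = _ := by ring
  have hi1 : Integrable (fun ξ => u.ft ξ * testFT χ (ξ - ξ₀)) volume := by
    refine (hfi.const_mul _).mono' ?_ (.of_forall hbnd)
    exact (u.cont.mul (hX.comp (by fun_prop))).aestronglyMeasurable
  have hev : ∀ᶠ n : ℕ in atTop, (∫ ξ : R2, u.ft ξ * ((n : ℂ) ^ 2 * testFT χ ((n : ℝ) • (ξ - ξ₀)))) =
      ∫ ξ : R2, u.ft ξ * testFT χ (ξ - ξ₀) := by
    filter_upwards [eventually_ge_atTop 1] with n hn
    have hn1 : (1 : ℝ) ≤ n := by exact_mod_cast hn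
    have hn0 : (n : ℝ) ≠ 0 := by positivity
    have hi2 : Integrable (fun ξ => u.ft ξ * ((n : ℂ) ^ 2 * testFT χ ((n : ℝ) • (ξ - ξ₀))))
        volume := by
      refine ((hfi.const_mul (n ^ 2 * (D * (4 * (1 + R ^ 2) ^ 2))))).mono' ?_
        (.of_forall fun ξ => ?_)
      · exact (u.cont.mul (continuous_const.mul (hX.comp (by fun_prop)))).aestronglyMeasurable
      · rw [norm_mul, norm_mul, norm_pow, Complex.norm_natCast]
        have hm : ‖testFT χ ((n : ℝ) • (ξ - ξ₀))‖ ≤ D * ((1 + ‖ξ - ξ₀‖ ^ 2) ^ 2)⁻¹ := by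
          refine (hXb _).trans ?_
          rw [norm_smul, Real.norm_of_nonneg (by positivity : (0:ℝ) ≤ n)]
          gcongr
          exact le_mul_of_one_le_left (norm_nonneg _) hn1
        calc ‖u.ft ξ‖ * ((n : ℝ) ^ 2 * ‖testFT χ ((n : ℝ) • (ξ - ξ₀))‖)
            ≤ ‖u.ft ξ‖ * ((n : ℝ) ^ 2 * (D * (4 * (1 + ‖ξ₀‖ ^ 2) ^ 2 * ((1 + ‖ξ‖ ^ 2) ^ 2)⁻¹))) := by
              gcongr
              exact hm.trans (by gcongr; exact peetre ξ ξ₀)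
          _ ≤ ‖u.ft ξ‖ * ((n : ℝ) ^ 2 * (D * (4 * (1 + R ^ 2) ^ 2 * ((1 + ‖ξ‖ ^ 2) ^ 2)⁻¹))) := by
              gcongr
          _ = _ := by ring
    let φ : R2 → ℂ := fun x =>
      (χ ((n : ℝ)⁻¹ • x) - χ x) * Complex.exp (-(Complex.I * (rdot x ξ₀ : ℂ)))
    have hφ1 : ContDiff ℝ ∞ φ := by
      refine ContDiff.mul ((h1.comp (by fun_prop)).sub h1) ?_
      have : ContDiff ℝ ∞ fun x : R2 => -(Complex.I * (rdot x ξ₀ : ℂ)) := by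
        have hr : ContDiff ℝ ∞ fun x : R2 => rdot x ξ₀ := by
          unfold rdot
          fun_prop
        exact (contDiff_const.mul (Complex.ofRealCLM.contDiff.comp hr)).neg
      exact this.cexp
    have hφ2 : HasCompactSupport φ := by
      refine HasCompactSupport.mul_right ?_
      refine HasCompactSupport.sub ?_ h2
      exact h2.comp_smul (inv_ne_zero hn0)
    have hφ3 : tsupport φ ∩ closure Γ = ∅ := by
      have a1 : tsupport φ ⊆ (Metric.ball (0 : R2) (R₀ + 1))ᶜ := by
        refine closure_minimal ?_ Metric.isOpen_ball.isClosed_compl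
        intro x hx hxb
        apply hx
        have hx1 : ‖x‖ < R₀ + 1 := by simpa using hxb
        have hx2 : ‖(n : ℝ)⁻¹ • x‖ ≤ R₀ + 1 := by
          rw [norm_smul, norm_inv, Real.norm_of_nonneg (by positivity : (0:ℝ) ≤ n)]
          exact (mul_le_of_le_one_left (norm_nonneg _) (inv_le_one_of_one_le₀ hn1)).trans hx1.le
        simp only [φ, h3 _ hx1.le, h3 _ hx2, sub_self, zero_mul]
      have a2 : closure Γ ⊆ Metric.closedBall (0 : R2) R₀ :=
        closure_minimal hsub Metric.isClosed_closedBall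
      rw [Set.eq_empty_iff_forall_notMem]
      rintro x ⟨hx1, hx2⟩
      have b1 := a1 hx1
      have b2 := a2 hx2
      simp at b1 b2
      linarith
    have hz := u.supp φ hφ1 hφ2 hφ3
    have : (fun ξ => u.ft ξ * testFT φ ξ) = fun ξ =>
        u.ft ξ * ((n : ℂ) ^ 2 * testFT χ ((n : ℝ) • (ξ - ξ₀))) - u.ft ξ * testFT χ (ξ - ξ₀) := by
      ext ξ
      rw [testFT_phi h1 h2 ξ₀ n hn ξ, mul_sub]
    rw [this, integral_sub hi2 hi1] at hz
    exact sub_eq_zero.1 hz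
  have heq := tendsto_nhds_unique (hlim.congr' hev) tendsto_const_nhds
  have hn1 : ‖u.ft ξ₀‖ * (2 * π) ^ 2 ≤ (D * (4 * (1 + R ^ 2) ^ 2)) *
      ∫ ξ : R2, ‖u.ft ξ‖ * ((1 + ‖ξ‖ ^ 2) ^ 2)⁻¹ := by
    have : ‖u.ft ξ₀ * ∫ ξ : R2, testFT χ ξ‖ = ‖u.ft ξ₀‖ * (2 * π) ^ 2 := by
      rw [hXint, norm_mul, Complex.norm_real, Real.norm_of_nonneg (by positivity)]
    rw [← this, heq, ← integral_const_mul]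
    exact norm_integral_le_of_norm_le (hfi.const_mul _) (.of_forall hbnd)
  have hn2 : ‖u.ft ξ₀‖ ≤ (D * (4 * (1 + R ^ 2) ^ 2)) *
      ∫ ξ : R2, ‖u.ft ξ‖ * ((1 + ‖ξ‖ ^ 2) ^ 2)⁻¹ := by
    refine (le_mul_of_one_le_right (norm_nonneg _) ?_).trans hn1
    nlinarith [Real.pi_gt_three]
  calc ‖u.ft ξ₀‖ ^ 2 ≤ ((D * (4 * (1 + R ^ 2) ^ 2)) *
      ∫ ξ : R2, ‖u.ft ξ‖ * ((1 + ‖ξ‖ ^ 2) ^ 2)⁻¹) ^ 2 := by gcongr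
    _ = (D * (4 * (1 + R ^ 2) ^ 2)) ^ 2 *
      (∫ ξ : R2, ‖u.ft ξ‖ * ((1 + ‖ξ‖ ^ 2) ^ 2)⁻¹) ^ 2 := by rw [mul_pow]
    _ ≤ (D * (4 * (1 + R ^ 2) ^ 2)) ^ 2 * (4 * K * N) := by gcongr
    _ = _ := by ring

/-- The singular weight near `|ξ| = k`. -/
def Tw (k : ℝ) (ξ : R2) : ℝ :=
  if ‖ξ‖ ^ 2 < 2 * k ^ 2 then (Real.sqrt |‖ξ‖ ^ 2 - k ^ 2|)⁻¹ else 0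

lemma Tw_nonneg (k : ℝ) (ξ : R2) : 0 ≤ Tw k ξ := by
  unfold Tw; split_ifs <;> positivity

lemma integrable_Tw (k : ℝ) (hk : 0 < k) : Integrable (Tw k) volume := by
  let h : ℝ → ℝ := fun y => if y ^ 2 < 2 * k ^ 2 then (Real.sqrt |y ^ 2 - k ^ 2|)⁻¹ else 0
  have : Integrable (fun ξ : R2 => h ‖ξ‖) volume := by
    rw [integrable_fun_norm_addHaar]
    have hm : Measurable h := by
      refine Measurable.ite (measurableSet_lt (by fun_prop) (by fun_prop)) ?_ measurable_const
      fun_prop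
    have i1 : IntervalIntegrable (fun y : ℝ => (y - k) ^ (-(1/2) : ℝ)) volume 0 (2 * k) := by
      have := (intervalIntegral.intervalIntegrable_rpow' (a := -k) (b := k)
        (r := -(1/2)) (by norm_num)).comp_sub_right k
      simpa [two_mul] using this
    have i2 : IntervalIntegrable (fun y : ℝ => (k - y) ^ (-(1/2) : ℝ)) volume 0 (2 * k) := by
      have := (intervalIntegral.intervalIntegrable_rpow' (a := k) (b := -k)
        (r := -(1/2)) (by norm_num)).comp_sub_left k
      simpa [two_mul] using this
    have i3 := (intervalIntegrable_iff_integrableOn_Ioc_of_le (by linarith)).1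
      (((i1.norm.add i2.norm)).const_mul (2 * k * (Real.sqrt k)⁻¹))
    have i4 := i3.integrable_indicator measurableSet_Ioc
    refine i4.integrableOn.mono' ?_ ?_
    · simp only [finrank_euclideanSpace, Fintype.card_fin]
      have hid : Measurable fun y : ℝ => y ^ (2 - 1) := by fun_prop
      exact (hid.smul hm).aestronglyMeasurable
    · refine (ae_restrict_iff' measurableSet_Ioi).2 (.of_forall fun y hy => ?_)
      have hy : 0 < y := hy
      simp only [finrank_euclideanSpace, Fintype.card_fin, h]
      split_ifs with hlt
      · have hy2 : y < 2 * k := by nlinarith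
        have hmem : y ∈ Set.Ioc 0 (2 * k) := ⟨hy, hy2.le⟩
        rw [Set.indicator_of_mem hmem]
        simp only [Nat.add_one_sub_one, pow_one, smul_eq_mul]
        rw [Real.norm_of_nonneg (by positivity)]
        have f1 : y ^ 2 - k ^ 2 = (y + k) * (y - k) := by ring
        have f2 : (Real.sqrt |y ^ 2 - k ^ 2|)⁻¹ ≤ (Real.sqrt k)⁻¹ * (Real.sqrt |y - k|)⁻¹ := by
          rw [f1, abs_mul, Real.sqrt_mul (abs_nonneg _), mul_inv, abs_of_pos (by linarith : 0 < y + k)]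
          gcongr
          linarith
        have f3 : (Real.sqrt |y - k|)⁻¹ ≤ ‖(y - k) ^ (-(1/2) : ℝ)‖ + ‖(k - y) ^ (-(1/2) : ℝ)‖ := by
          have f4 : ∀ z : ℝ, 0 ≤ z → (Real.sqrt z)⁻¹ = ‖z ^ (-(1/2) : ℝ)‖ := by
            intro z hz
            rw [Real.norm_of_nonneg (by positivity), Real.rpow_neg hz, Real.sqrt_eq_rpow]
          rcases le_total k y with hh | hh
          · rw [abs_of_nonneg (by linarith), f4 _ (by linarith)]
            exact le_add_of_nonneg_right (norm_nonneg _)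
          · rw [abs_of_nonpos (by linarith), neg_sub, f4 _ (by linarith)]
            exact le_add_of_nonneg_left (norm_nonneg _)
        calc y * (Real.sqrt |y ^ 2 - k ^ 2|)⁻¹
            ≤ (2 * k) * ((Real.sqrt k)⁻¹ * (‖(y - k) ^ (-(1/2) : ℝ)‖ + ‖(k - y) ^ (-(1/2) : ℝ)‖)) := by
              gcongr
              exact f2.trans (by gcongr)
          _ = _ := by ring
      · simp only [smul_zero, norm_zero]
        refine Set.indicator_nonneg (fun z _ => ?_) y
        positivity
  exact this

lemma w_eq (ξ : R2) : ((1 : ℝ) + ‖ξ‖ ^ 2) ^ (-(1/2) : ℝ) = (Real.sqrt (1 + ‖ξ‖ ^ 2))⁻¹ := by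
  rw [Real.rpow_neg (by positivity), Real.sqrt_eq_rpow]

lemma alg_big (k x d2 c2 P : ℝ) (hk : 0 < k) (hx : 2 * k ^ 2 ≤ x) (hd : 0 ≤ d2) (hc : 0 ≤ c2)
    (h : d2 + c2 = x * P) :
    (1/2) * ((Real.sqrt (1 + x))⁻¹ * d2) - (3 * k ^ 2 + 1) * ((Real.sqrt (1 + x))⁻¹ * P) ≤
      (((x - k ^ 2) * d2 - k ^ 2 * c2) / x) / Real.sqrt (x - k ^ 2) ∧
    |((x - k ^ 2) * d2 - k ^ 2 * c2) / x| / Real.sqrt (x - k ^ 2) ≤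
      (1 + (k ^ 2)⁻¹) * ((Real.sqrt (1 + x))⁻¹ * d2) +
        (3 * k ^ 2 + 1) * ((Real.sqrt (1 + x))⁻¹ * P) := by
  have hk2 : 0 < k ^ 2 := by positivity
  have hx0 : 0 < x := by linarith
  have hP : 0 ≤ P := by
    by_contra hneg
    nlinarith [mul_neg_of_pos_of_neg hx0 (not_le.1 hneg)]
  set s := Real.sqrt (x - k ^ 2)
  set W := Real.sqrt (1 + x)
  have hs : 0 < s := Real.sqrt_pos.2 (by linarith)
  have hW : 0 < W := Real.sqrt_pos.2 (by linarith)
  have hs2 : s ^ 2 = x - k ^ 2 := Real.sq_sqrt (by linarith)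
  have hW2 : W ^ 2 = 1 + x := Real.sq_sqrt (by linarith)
  have hcx : c2 / x ≤ P := by rw [div_le_iff₀ hx0]; linarith
  have hj : 0 < (k ^ 2)⁻¹ := by positivity
  have hjk : (k ^ 2)⁻¹ * k ^ 2 = 1 := inv_mul_cancel₀ hk2.ne'
  have hjx : 1 ≤ (k ^ 2)⁻¹ * x := by nlinarith
  have hjs : 1 ≤ (k ^ 2)⁻¹ * s ^ 2 := by nlinarith
  -- s / x lower and upper, 1 / s upper
  have k1 : (1/2) * W⁻¹ ≤ s / x := by
    rw [le_div_iff₀ hx0, ← div_eq_mul_inv, div_mul_eq_mul_div, div_le_iff₀ hW]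
    refine abs_le_of_sq_le_sq' ?_ (by positivity) |>.2
    rw [mul_pow, mul_pow, hs2, hW2]
    nlinarith
  have k2 : s⁻¹ ≤ (3 + (k ^ 2)⁻¹) * W⁻¹ := by
    rw [← div_eq_mul_inv, le_div_iff₀ hW, inv_mul_le_iff₀ hs]
    refine abs_le_of_sq_le_sq' ?_ (by positivity) |>.2
    have : 1 + x ≤ s ^ 2 * (3 + (k ^ 2)⁻¹) := by nlinarith
    rw [mul_pow, hW2]
    nlinarith [mul_nonneg (sq_nonneg s) hj.le, mul_nonneg (sq_nonneg s) (sq_nonneg (k ^ 2)⁻¹)]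
  have k3 : s / x ≤ (1 + (k ^ 2)⁻¹) * W⁻¹ := by
    rw [← div_eq_mul_inv, div_le_div_iff₀ hx0 hW]
    refine abs_le_of_sq_le_sq' ?_ (by positivity) |>.2
    rw [mul_pow, mul_pow, hs2, hW2]
    have : 1 + x ≤ (1 + (k ^ 2)⁻¹) * x := by nlinarith
    have h2 : (x - k ^ 2) * (1 + x) ≤ x * ((1 + (k ^ 2)⁻¹) * x) := by gcongr; linarith
    nlinarith [mul_nonneg (sq_nonneg x) hj.le, mul_nonneg (sq_nonneg x) (sq_nonneg (k ^ 2)⁻¹)]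
  have e : (((x - k ^ 2) * d2 - k ^ 2 * c2) / x) / s = (s / x) * d2 - k ^ 2 * (c2 / x) * s⁻¹ := by
    rw [← hs2]; field_simp
  have b1 : k ^ 2 * (c2 / x) * s⁻¹ ≤ (3 * k ^ 2 + 1) * (W⁻¹ * P) := by
    calc k ^ 2 * (c2 / x) * s⁻¹ ≤ k ^ 2 * P * ((3 + (k ^ 2)⁻¹) * W⁻¹) := by gcongr
      _ = (3 * k ^ 2 + (k ^ 2)⁻¹ * k ^ 2) * (W⁻¹ * P) := by ring
      _ = _ := by rw [hjk]
  have b0 : 0 ≤ k ^ 2 * (c2 / x) * s⁻¹ := by positivity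
  have b2 := mul_le_mul_of_nonneg_right k1 hd
  have b3 := mul_le_mul_of_nonneg_right k3 hd
  have b4 : 0 ≤ (s / x) * d2 := by positivity
  constructor
  · rw [e]; linarith
  · rw [← abs_of_pos hs, ← abs_div, e, abs_le]
    have b5 : 0 ≤ (1 + (k ^ 2)⁻¹) * (W⁻¹ * d2) := by positivity
    constructor <;> linarith

lemma alg_small (k x d2 c2 P : ℝ) (hk : 0 < k) (hx0 : 0 ≤ x) (hx : x < 2 * k ^ 2) (hd : 0 ≤ d2)
    (hc : 0 ≤ c2) (hP : 0 ≤ P) (h : d2 + c2 = x * P) :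
    |((x - k ^ 2) * d2 - k ^ 2 * c2) / x| / Real.sqrt |x - k ^ 2| ≤
      2 * k ^ 2 * ((Real.sqrt |x - k ^ 2|)⁻¹ * P) ∧
    -(k ^ 2 * ((Real.sqrt |x - k ^ 2|)⁻¹ * P)) ≤ - (k ^ 2 * (c2 / x) / Real.sqrt |x - k ^ 2|) ∧
    (1/2) * ((Real.sqrt (1 + x))⁻¹ * d2) ≤ (3 * k ^ 2 + 1) * ((Real.sqrt (1 + x))⁻¹ * P) := by
  have hk2 : 0 < k ^ 2 := by positivity
  have hcx : c2 / x ≤ P := div_le_of_le_mul₀ hx0 hP (by linarith)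
  have hdx : d2 / x ≤ P := div_le_of_le_mul₀ hx0 hP (by linarith)
  have hsum : d2 / x + c2 / x ≤ P := by
    rw [← add_div]; exact div_le_of_le_mul₀ hx0 hP (by linarith)
  have hd0 : 0 ≤ d2 / x := by positivity
  have hc0 : 0 ≤ c2 / x := by positivity
  refine ⟨?_, ?_, ?_⟩
  · have : |((x - k ^ 2) * d2 - k ^ 2 * c2) / x| ≤ 2 * k ^ 2 * P := by
      have e : ((x - k ^ 2) * d2 - k ^ 2 * c2) / x = (x - k ^ 2) * (d2 / x) - k ^ 2 * (c2 / x) := by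
        ring
      rw [e, abs_le]
      constructor <;> nlinarith
    rw [div_eq_mul_inv]
    calc _ ≤ 2 * k ^ 2 * P * (Real.sqrt |x - k ^ 2|)⁻¹ := by gcongr
      _ = _ := by ring
  · rw [neg_le_neg_iff, div_eq_mul_inv]
    calc _ ≤ k ^ 2 * P * (Real.sqrt |x - k ^ 2|)⁻¹ := by gcongr
      _ = _ := by ring
  · have : d2 ≤ 2 * k ^ 2 * P := by nlinarith
    calc (1/2) * ((Real.sqrt (1 + x))⁻¹ * d2)
        ≤ (1/2) * ((Real.sqrt (1 + x))⁻¹ * (2 * k ^ 2 * P)) := by gcongr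
      _ = k ^ 2 * ((Real.sqrt (1 + x))⁻¹ * P) := by ring
      _ ≤ _ := by gcongr; linarith

lemma dot_curl (F1 F2 : R2 → ℂ) (ξ : R2) :
    ‖dotFt F1 F2 ξ‖ ^ 2 + ‖curlFt F1 F2 ξ‖ ^ 2 = ‖ξ‖ ^ 2 * (‖F1 ξ‖ ^ 2 + ‖F2 ξ‖ ^ 2) := by
  rw [EuclideanSpace.real_norm_sq_eq]
  simp only [Complex.sq_norm, Complex.normSq_apply, dotFt, curlFt, Fin.sum_univ_two]
  simp
  ring

lemma Bint_eq (k : ℝ) (F1 F2 : R2 → ℂ) (ξ : R2) : Bintegrand k F1 F2 F1 F2 ξ = g0hat k ξ *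
    ((((‖ξ‖ ^ 2 - k ^ 2) * ‖dotFt F1 F2 ξ‖ ^ 2 - k ^ 2 * ‖curlFt F1 F2 ξ‖ ^ 2) / ‖ξ‖ ^ 2 : ℝ) : ℂ) := by
  unfold Bintegrand
  rw [Complex.mul_conj, Complex.mul_conj, Complex.normSq_eq_norm_sq, Complex.normSq_eq_norm_sq]
  push_cast
  ring

lemma norm_g0hat (k : ℝ) (hk : 0 < k) (ξ : R2) :
    ‖g0hat k ξ‖ = (Real.sqrt |‖ξ‖ ^ 2 - k ^ 2|)⁻¹ := by
  unfold g0hat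
  split_ifs with h
  · have : ‖ξ‖ ^ 2 < k ^ 2 := by gcongr
    rw [abs_of_neg (by linarith), neg_sub, norm_div, Complex.norm_I, Complex.norm_real,
      Real.norm_of_nonneg (Real.sqrt_nonneg _), one_div]
  · have : k ^ 2 ≤ ‖ξ‖ ^ 2 := by gcongr; exact not_lt.1 h
    rw [abs_of_nonneg (by linarith), norm_div, norm_one, Complex.norm_real,
      Real.norm_of_nonneg (Real.sqrt_nonneg _), one_div]

lemma Bint_bounds (k : ℝ) (hk : 0 < k) (F1 F2 : R2 → ℂ) (ξ : R2) :
    (1/2) * (((1 : ℝ) + ‖ξ‖ ^ 2) ^ (-(1/2) : ℝ) * ‖dotFt F1 F2 ξ‖ ^ 2) -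
      (3 * k ^ 2 + 1) * (((1 : ℝ) + ‖ξ‖ ^ 2) ^ (-(1/2) : ℝ) * (‖F1 ξ‖ ^ 2 + ‖F2 ξ‖ ^ 2)) -
      k ^ 2 * (Tw k ξ * (‖F1 ξ‖ ^ 2 + ‖F2 ξ‖ ^ 2)) ≤ (Bintegrand k F1 F2 F1 F2 ξ).re ∧
    ‖Bintegrand k F1 F2 F1 F2 ξ‖ ≤
      (1 + (k ^ 2)⁻¹) * (((1 : ℝ) + ‖ξ‖ ^ 2) ^ (-(1/2) : ℝ) * ‖dotFt F1 F2 ξ‖ ^ 2) +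
      (3 * k ^ 2 + 1) * (((1 : ℝ) + ‖ξ‖ ^ 2) ^ (-(1/2) : ℝ) * (‖F1 ξ‖ ^ 2 + ‖F2 ξ‖ ^ 2)) +
      2 * k ^ 2 * (Tw k ξ * (‖F1 ξ‖ ^ 2 + ‖F2 ξ‖ ^ 2)) := by
  have hdc := dot_curl F1 F2 ξ
  have hre : ¬ ‖ξ‖ < k → (Bintegrand k F1 F2 F1 F2 ξ).re =
      (((‖ξ‖ ^ 2 - k ^ 2) * ‖dotFt F1 F2 ξ‖ ^ 2 - k ^ 2 * ‖curlFt F1 F2 ξ‖ ^ 2) / ‖ξ‖ ^ 2) /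
        Real.sqrt (‖ξ‖ ^ 2 - k ^ 2) := by
    intro h
    rw [Bint_eq, g0hat, if_neg h, one_div, ← Complex.ofReal_inv, ← Complex.ofReal_mul,
      Complex.ofReal_re, mul_comm, ← div_eq_mul_inv]
  have hre0 : ‖ξ‖ < k → (Bintegrand k F1 F2 F1 F2 ξ).re = 0 := by
    intro h
    rw [Bint_eq, g0hat, if_pos h, div_eq_mul_inv, ← Complex.ofReal_inv, mul_assoc,
      ← Complex.ofReal_mul, Complex.I_mul_re, Complex.ofReal_im, neg_zero]
  have hnorm : ‖Bintegrand k F1 F2 F1 F2 ξ‖ =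
      |((‖ξ‖ ^ 2 - k ^ 2) * ‖dotFt F1 F2 ξ‖ ^ 2 - k ^ 2 * ‖curlFt F1 F2 ξ‖ ^ 2) / ‖ξ‖ ^ 2| /
        Real.sqrt |‖ξ‖ ^ 2 - k ^ 2| := by
    rw [Bint_eq, norm_mul, norm_g0hat k hk, Complex.norm_real, Real.norm_eq_abs, mul_comm,
      ← div_eq_mul_inv]
  rw [w_eq, hnorm]
  set d2 := ‖dotFt F1 F2 ξ‖ ^ 2
  set c2 := ‖curlFt F1 F2 ξ‖ ^ 2
  set P := ‖F1 ξ‖ ^ 2 + ‖F2 ξ‖ ^ 2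
  have hd : 0 ≤ d2 := by positivity
  have hc : 0 ≤ c2 := by positivity
  have hP : 0 ≤ P := by positivity
  have hk2 : 0 < k ^ 2 := by positivity
  have hj : 0 < (k ^ 2)⁻¹ := by positivity
  have p1 : 0 ≤ (Real.sqrt (1 + ‖ξ‖ ^ 2))⁻¹ * P := by positivity
  have p2 : 0 ≤ (Real.sqrt (1 + ‖ξ‖ ^ 2))⁻¹ * d2 := by positivity
  have p3 : 0 ≤ (Real.sqrt |‖ξ‖ ^ 2 - k ^ 2|)⁻¹ * P := by positivity
  rcases lt_or_ge (‖ξ‖ ^ 2) (2 * k ^ 2) with hx | hx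
  · obtain ⟨a1, a2, a3⟩ := alg_small k (‖ξ‖ ^ 2) d2 c2 P hk (by positivity) hx hd hc hP hdc
    rw [Tw, if_pos hx]
    constructor
    · by_cases hlt : ‖ξ‖ < k
      · rw [hre0 hlt]
        have := mul_nonneg hk2.le p3
        linarith
      · rw [hre hlt]
        have hge : k ^ 2 ≤ ‖ξ‖ ^ 2 := by gcongr; exact not_lt.1 hlt
        rw [abs_of_nonneg (by linarith : 0 ≤ ‖ξ‖ ^ 2 - k ^ 2)] at *
        have e : (((‖ξ‖ ^ 2 - k ^ 2) * d2 - k ^ 2 * c2) / ‖ξ‖ ^ 2) / Real.sqrt (‖ξ‖ ^ 2 - k ^ 2) =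
            (‖ξ‖ ^ 2 - k ^ 2) * (d2 / ‖ξ‖ ^ 2) / Real.sqrt (‖ξ‖ ^ 2 - k ^ 2) -
              k ^ 2 * (c2 / ‖ξ‖ ^ 2) / Real.sqrt (‖ξ‖ ^ 2 - k ^ 2) := by ring
        have : 0 ≤ (‖ξ‖ ^ 2 - k ^ 2) * (d2 / ‖ξ‖ ^ 2) / Real.sqrt (‖ξ‖ ^ 2 - k ^ 2) := by
          have : 0 ≤ ‖ξ‖ ^ 2 - k ^ 2 := by linarith
          positivity
        rw [e]
        linarith
    · have q1 : 0 ≤ (1 + (k ^ 2)⁻¹) * ((Real.sqrt (1 + ‖ξ‖ ^ 2))⁻¹ * d2) := by positivity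
      have q2 : 0 ≤ (3 * k ^ 2 + 1) * ((Real.sqrt (1 + ‖ξ‖ ^ 2))⁻¹ * P) := by positivity
      linarith
  · obtain ⟨a1, a2⟩ := alg_big k (‖ξ‖ ^ 2) d2 c2 P hk hx hd hc hdc
    have hlt : ¬ ‖ξ‖ < k := by
      intro h
      have : ‖ξ‖ ^ 2 < k ^ 2 := by gcongr
      linarith
    rw [Tw, if_neg (not_lt.2 hx), hre hlt, abs_of_nonneg (by linarith : 0 ≤ ‖ξ‖ ^ 2 - k ^ 2)]
    constructor
    · linarith
    · linarith

lemma Bint_meas (k : ℝ) {F1 F2 : R2 → ℂ} (h1 : Continuous F1) (h2 : Continuous F2) :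
    AEStronglyMeasurable (Bintegrand k F1 F2 F1 F2) volume := by
  have hg : Measurable (g0hat k) := by
    unfold g0hat
    refine Measurable.ite (measurableSet_lt (by fun_prop) (by fun_prop)) ?_ ?_ <;> fun_prop
  have hd : Measurable (dotFt F1 F2) := by
    have : Continuous (dotFt F1 F2) := by unfold dotFt; fun_prop
    exact this.measurable
  have hc : Measurable (curlFt F1 F2) := by
    have : Continuous (curlFt F1 F2) := by unfold curlFt; fun_prop
    exact this.measurable
  have : Bintegrand k F1 F2 F1 F2 = fun ξ => g0hat k ξ *
    ((((‖ξ‖ ^ 2 - k ^ 2) * ‖dotFt F1 F2 ξ‖ ^ 2 - k ^ 2 * ‖curlFt F1 F2 ξ‖ ^ 2) / ‖ξ‖ ^ 2 : ℝ) : ℂ) :=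
    funext fun ξ => Bint_eq k F1 F2 ξ
  rw [this]
  refine (hg.mul ?_).aestronglyMeasurable
  fun_prop

/-- Lemma 3.2: Gårding-type coercivity of `B` on `X` relative to the
weaker norm of `H`: there are `c, C > 0` with `Re B(U,U) ≥ c ‖U‖²_X - C ‖U‖²_H`. -/
theorem statement2 (Γ : Set R2) (hΓ : IsLipschitzDomain Γ) (k : ℝ) (hk : 0 < k) :
    ∃ c > 0, ∃ C > 0, ∀ U : Xelt Γ,
      c * XnormSq U - C * HnormSq U ≤ (Bform k U U).re := by
  have hk2 : 0 < k ^ 2 := by positivity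
  obtain ⟨C3, hC3, hpt⟩ := ptwise Γ hΓ.2.1 (2 * k)
  have hTi := integrable_Tw k hk
  set J := ∫ ξ : R2, Tw k ξ
  have hJ : 0 ≤ J := integral_nonneg fun ξ => Tw_nonneg k ξ
  have hpi : 0 < (2 * π) ^ 2 := by positivity
  refine ⟨(2 * π) ^ 2 / 2, by positivity,
    (2 * π) ^ 2 / 2 + (2 * π) ^ 2 * (3 * k ^ 2 + 1 + k ^ 2 * C3 * J), by positivity, fun U => ?_⟩
  set F1 := U.c1.ft
  set F2 := U.c2.ft
  set N1 := ∫ ξ : R2, ((1 : ℝ) + ‖ξ‖ ^ 2) ^ (-(1/2) : ℝ) * ‖F1 ξ‖ ^ 2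
  set N2 := ∫ ξ : R2, ((1 : ℝ) + ‖ξ‖ ^ 2) ^ (-(1/2) : ℝ) * ‖F2 ξ‖ ^ 2
  set Dv := ∫ ξ : R2, ((1 : ℝ) + ‖ξ‖ ^ 2) ^ (-(1/2) : ℝ) * ‖dotFt F1 F2 ξ‖ ^ 2
  have hH : HnormSq U = ((2 * π) ^ 2)⁻¹ * (N1 + N2) := by
    rw [mul_add]; rfl
  have hXn : XnormSq U = HnormSq U + ((2 * π) ^ 2)⁻¹ * Dv := by
    have : ∀ ξ, ‖divFt U ξ‖ = ‖dotFt F1 F2 ξ‖ := by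
      intro ξ
      simp [divFt, F1, F2]
    unfold XnormSq wnormSq
    simp only [this]
    rfl
  have iW : Integrable (fun ξ : R2 => ((1 : ℝ) + ‖ξ‖ ^ 2) ^ (-(1/2) : ℝ) *
      (‖F1 ξ‖ ^ 2 + ‖F2 ξ‖ ^ 2)) volume := by
    simp only [mul_add]
    exact U.c1.mem.add U.c2.mem
  have eW : (∫ ξ : R2, ((1 : ℝ) + ‖ξ‖ ^ 2) ^ (-(1/2) : ℝ) *
      (‖F1 ξ‖ ^ 2 + ‖F2 ξ‖ ^ 2)) = N1 + N2 := by
    simp only [mul_add]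
    exact integral_add U.c1.mem U.c2.mem
  have iD : Integrable (fun ξ : R2 => ((1 : ℝ) + ‖ξ‖ ^ 2) ^ (-(1/2) : ℝ) *
      ‖dotFt F1 F2 ξ‖ ^ 2) volume := U.divMem
  have bT : ∀ ξ : R2, Tw k ξ * (‖F1 ξ‖ ^ 2 + ‖F2 ξ‖ ^ 2) ≤ (C3 * (N1 + N2)) * Tw k ξ := by
    intro ξ
    by_cases hx : ‖ξ‖ ^ 2 < 2 * k ^ 2
    · have hle : ‖ξ‖ ≤ 2 * k := by nlinarith [norm_nonneg ξ]
      have q1 : ‖F1 ξ‖ ^ 2 ≤ C3 * N1 := hpt U.c1 ξ hle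
      have q2 : ‖F2 ξ‖ ^ 2 ≤ C3 * N2 := hpt U.c2 ξ hle
      rw [mul_comm]
      exact mul_le_mul_of_nonneg_right (by linarith) (Tw_nonneg k ξ)
    · simp [Tw, hx]
  have c1 : Continuous F1 := U.c1.cont
  have c2 : Continuous F2 := U.c2.cont
  have iT : Integrable (fun ξ : R2 => Tw k ξ * (‖F1 ξ‖ ^ 2 + ‖F2 ξ‖ ^ 2)) volume := by
    refine (hTi.const_mul (C3 * (N1 + N2))).mono' ?_ (.of_forall fun ξ => ?_)
    · refine hTi.aestronglyMeasurable.mul (Continuous.aestronglyMeasurable ?_)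
      fun_prop
    · rw [Real.norm_of_nonneg (mul_nonneg (Tw_nonneg k ξ) (by positivity))]
      exact bT ξ
  have eT : (∫ ξ : R2, Tw k ξ * (‖F1 ξ‖ ^ 2 + ‖F2 ξ‖ ^ 2)) ≤ (C3 * (N1 + N2)) * J := by
    rw [← integral_const_mul]
    exact integral_mono iT (hTi.const_mul _) bT
  have iB : Integrable (Bintegrand k F1 F2 F1 F2) volume :=
    (((iD.const_mul (1 + (k ^ 2)⁻¹)).add (iW.const_mul (3 * k ^ 2 + 1))).add
      (iT.const_mul (2 * k ^ 2))).mono' (Bint_meas k c1 c2)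
      (.of_forall fun ξ => (Bint_bounds k hk F1 F2 ξ).2)
  have hre : (Bform k U U).re = ∫ ξ : R2, (Bintegrand k F1 F2 F1 F2 ξ).re :=
    (integral_re iB).symm
  have i1 := iD.const_mul (1/2)
  have i2 := iW.const_mul (3 * k ^ 2 + 1)
  have i3 := iT.const_mul (k ^ 2)
  have hmain : (1/2) * Dv - (3 * k ^ 2 + 1) * (N1 + N2) -
      k ^ 2 * (∫ ξ : R2, Tw k ξ * (‖F1 ξ‖ ^ 2 + ‖F2 ξ‖ ^ 2)) ≤ (Bform k U U).re := by
    rw [hre, ← eW, ← integral_const_mul, ← integral_const_mul, ← integral_const_mul,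
      ← integral_sub i1 i2]
    refine (integral_sub (i1.sub i2) i3).symm.trans_le ?_
    exact integral_mono ((i1.sub i2).sub i3) iB.re (fun ξ => (Bint_bounds k hk F1 F2 ξ).1)
  have hfin := mul_le_mul_of_nonneg_left eT hk2.le
  have hN : N1 + N2 = (2 * π) ^ 2 * HnormSq U := by
    rw [hH, ← mul_assoc, mul_inv_cancel₀ hpi.ne', one_mul]
  have hDv : (2 * π) ^ 2 / 2 * XnormSq U = (2 * π) ^ 2 / 2 * HnormSq U + (1/2) * Dv := by
    rw [hXn, mul_add]
    congr 1
    field_simp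
  rw [hDv]
  rw [hN] at hmain hfin
  linarith

end
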